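/- arXiv:2303.08776 — 6 statements merged into one kernel-verified Lean document; each statement's English description precedes it below -/
import Mathlib

section
/- Let $M_1, M_2, \ldots, M_t$ be matroids on finite ground sets $E_1, E_2, \ldots, E_t$ with rank functions $r_1, r_2, \ldots, r_t$, and let $E = E_1 \cup \cdots \cup E_t$. Then for every set $A \subseteq E$, the maximum cardinality of a subset of $A$ that can be written as a union $A_1 \cup \cdots \cup A_t$ with each $A_i$ independent in $M_i$ (i.e., the rank of $A$ in the union matroid) equals $\min_{X \subseteq A} \left( \sum_{i=1}^t r_i(X \cap E_i) + |A \setminus X| \right)$. -/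
/-!
The inequality `≤` is immediate: if `B i` is independent in `M i` and `⋃ i, B i ⊆ A`, then the part
of `⋃ i, B i` inside `X` has at most `∑ i, rᵢ(X ∩ E i)` elements, and the part outside `X` has at
most `|A \ X|`.

For `≥`, let `k` be the minimum, and consider families of sets `S i ⊆ A` such that
`k ≤ ∑ i, rᵢ(S i ∩ Y) + |A \ Y|` for every `Y ⊆ A`. The constant family `A` is one. As long as some
element `e` lies in two of the sets, it can be deleted from one of the two without destroying the
property: if `Y₁` and `Y₂` witness that the two deletions fail, then submodularity of the `rᵢ`,
applied to `Y₁` and `Y₂`, contradicts the property for `Y₁ ∪ Y₂` and `(Y₁ ∩ Y₂) \ {e}`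
(`exists_deletion`). Hence the `S i` may be taken pairwise disjoint, and then bases `B i` of the
`S i` have `|⋃ i, B i| = ∑ i, rᵢ(S i) ≥ k`, by the property for `Y = A`.
-/

/-- The rank of a set `X` in a matroid `M`: the maximum cardinality of an
independent set of `M` contained in `X`. -/
noncomputable def matroidRank {α : Type*} (M : Matroid α) (X : Set α) : ℕ :=
  sSup {n : ℕ | ∃ I, I ⊆ X ∧ M.Indep I ∧ I.ncard = n}

open Set Function

lemma matroidRank_bddAbove {α : Type*} {M : Matroid α} (hM : M.E.Finite) (X : Set α) :
    BddAbove {n : ℕ | ∃ I, I ⊆ X ∧ M.Indep I ∧ I.ncard = n} := by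
  refine ⟨M.E.ncard, ?_⟩
  rintro n ⟨I, -, hI, rfl⟩
  exact ncard_le_ncard hI.subset_ground hM

lemma exists_indep_ncard_eq_matroidRank {α : Type*} {M : Matroid α} (hM : M.E.Finite)
    (X : Set α) : ∃ I, I ⊆ X ∧ M.Indep I ∧ I.ncard = matroidRank M X :=
  Nat.sSup_mem (s := {n : ℕ | ∃ I, I ⊆ X ∧ M.Indep I ∧ I.ncard = n})
    ⟨0, ∅, empty_subset _, M.empty_indep, ncard_empty _⟩ (matroidRank_bddAbove hM X)

lemma ncard_le_matroidRank {α : Type*} {M : Matroid α} (hM : M.E.Finite) {I X : Set α}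
    (hI : M.Indep I) (hIX : I ⊆ X) : I.ncard ≤ matroidRank M X :=
  le_csSup (matroidRank_bddAbove hM X) ⟨I, hIX, hI, rfl⟩

lemma matroidRank_cast {α : Type*} {M : Matroid α} (hM : M.E.Finite) (X : Set α) :
    (matroidRank M X : ℕ∞) = M.eRk X := by
  apply le_antisymm
  · obtain ⟨I, hIX, hI, h⟩ := exists_indep_ncard_eq_matroidRank hM X
    rw [← h, (hM.subset hI.subset_ground).cast_ncard_eq]
    exact hI.encard_le_eRk_of_subset hIX
  · rw [Matroid.eRk_le_iff]
    intro I hIX hI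
    rw [← (hM.subset hI.subset_ground).cast_ncard_eq]
    exact_mod_cast ncard_le_matroidRank hM hI hIX

/-- Submodularity and monotonicity of the rank function, combined. -/
lemma matroidRank_submod {α : Type*} {M : Matroid α} (hM : M.E.Finite) {P Q X Z : Set α}
    (hP : P ⊆ X ∪ Z) (hQ : Q ⊆ X ∩ Z) :
    matroidRank M P + matroidRank M Q ≤ matroidRank M X + matroidRank M Z := by
  have h : (matroidRank M P + matroidRank M Q : ℕ∞) ≤ matroidRank M X + matroidRank M Z := by
    simp only [matroidRank_cast hM]
    calc M.eRk P + M.eRk Q ≤ M.eRk (X ∪ Z) + M.eRk (X ∩ Z) :=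
          add_le_add (M.eRk_mono hP) (M.eRk_mono hQ)
      _ = M.eRk (X ∩ Z) + M.eRk (X ∪ Z) := add_comm _ _
      _ ≤ _ := M.eRk_inter_add_eRk_union_le X Z
  exact_mod_cast h

lemma matroidRank_inter_ground {α : Type*} {M : Matroid α} (hM : M.E.Finite) (X : Set α) :
    matroidRank M (X ∩ M.E) = matroidRank M X := by
  have h : (matroidRank M (X ∩ M.E) : ℕ∞) = matroidRank M X := by
    rw [matroidRank_cast hM, matroidRank_cast hM, M.eRk_inter_ground]
  exact_mod_cast h

/-- The family `S` supports `k`: the bound `k ≤ ∑ i, rᵢ(S i ∩ Y) + |A \ Y|` holds for all `Y ⊆ A`.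
For finite `A`, `|A \ Y| = |A| - |Y|`; the bound is written without the subtraction. -/
def Supports {α : Type*} {t : ℕ} (M : Fin t → Matroid α) (A : Set α) (k : ℕ)
    (S : Fin t → Set α) : Prop :=
  ∀ Y ⊆ A, k + Y.ncard ≤ ∑ i, matroidRank (M i) (S i ∩ Y) + A.ncard

/-- An element common to two members of a supporting family can be deleted from one of them. -/
lemma exists_deletion {α : Type*} {t : ℕ} {M : Fin t → Matroid α}
    (hfin : ∀ i, (M i).E.Finite) {A : Set α} (hA : A.Finite) {k : ℕ} {S : Fin t → Set α}
    (hS : Supports M A k S) {i j : Fin t} (hij : i ≠ j) {e : α} :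
    Supports M A k (Function.update S i (S i \ {e})) ∨
      Supports M A k (Function.update S j (S j \ {e})) := by
  by_contra! hcon
  -- a violating set contains `e`, because the deletion is invisible to the other sets
  have key : ∀ l, ¬ Supports M A k (Function.update S l (S l \ {e})) → ∃ Y ⊆ A, e ∈ Y ∧
      ∑ m, matroidRank (M m) (Function.update S l (S l \ {e}) m ∩ Y) + A.ncard
        < k + Y.ncard := by
    intro l hl
    simp only [Supports, not_forall, not_le] at hl
    obtain ⟨Y, hYA, hY⟩ := hl
    refine ⟨Y, hYA, ?_, hY⟩
    by_contra heY
    refine (hS Y hYA).not_gt ?_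
    convert hY using 4 with m
    by_cases hm : m = l
    · subst hm
      ext x
      simp only [Function.update_self, mem_inter_iff, mem_sdiff, mem_singleton_iff]
      grind
    · simp [hm]
  obtain ⟨Y, hYA, heY, hY⟩ := key i hcon.1
  obtain ⟨Z, hZA, heZ, hZ⟩ := key j hcon.2
  have hU := hS (Y ∪ Z) (union_subset hYA hZA)
  have hI := hS ((Y ∩ Z) \ {e}) (fun x hx => hYA hx.1.1)
  have hsub : ∑ m, matroidRank (M m) (S m ∩ (Y ∪ Z)) +
      ∑ m, matroidRank (M m) (S m ∩ ((Y ∩ Z) \ {e})) ≤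
      ∑ m, matroidRank (M m) (Function.update S i (S i \ {e}) m ∩ Y) +
      ∑ m, matroidRank (M m) (Function.update S j (S j \ {e}) m ∩ Z) := by
    rw [← Finset.sum_add_distrib, ← Finset.sum_add_distrib]
    refine Finset.sum_le_sum fun m _ => matroidRank_submod (hfin m) ?_ ?_
    · intro x
      by_cases hmi : m = i <;> by_cases hmj : m = j <;>
        simp only [Function.update_apply, hmi, hmj, hij, hij.symm, if_true, if_false,
          mem_inter_iff, mem_union, mem_sdiff, mem_singleton_iff] <;> grind
    · intro x
      by_cases hmi : m = i <;> by_cases hmj : m = j <;>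
        simp only [Function.update_apply, hmi, hmj, hij, hij.symm, if_true, if_false,
          mem_inter_iff, mem_sdiff, mem_singleton_iff] <;> grind
  have h1 := ncard_union_add_ncard_inter Y Z (hA.subset hYA) (hA.subset hZA)
  have h2 := ncard_sdiff_singleton_add_one (show e ∈ Y ∩ Z from ⟨heY, heZ⟩)
    ((hA.subset hYA).subset inter_subset_left)
  omega

lemma exists_disjoint_supports {α : Type*} {t : ℕ} {M : Fin t → Matroid α}
    (hfin : ∀ i, (M i).E.Finite) {A : Set α} (hA : A.Finite) {k : ℕ} (S : Fin t → Set α)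
    (hSA : ∀ i, S i ⊆ A) (hS : Supports M A k S) :
    ∃ T : Fin t → Set α, (∀ i, T i ⊆ A) ∧ Supports M A k T ∧ Pairwise (Disjoint on T) := by
  induction hn : ∑ i, (S i).ncard using Nat.strong_induction_on generalizing S with
  | _ n ih =>
  subst hn
  by_cases hd : Pairwise (Disjoint on S)
  · exact ⟨S, hSA, hS, hd⟩
  simp only [Pairwise, not_forall, Function.onFun] at hd
  obtain ⟨i, j, hij, hd⟩ := hd
  obtain ⟨e, hei, hej⟩ := not_disjoint_iff.1 hd
  have step : ∀ l, e ∈ S l → Supports M A k (Function.update S l (S l \ {e})) →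
      ∃ T : Fin t → Set α, (∀ i, T i ⊆ A) ∧ Supports M A k T ∧ Pairwise (Disjoint on T) := by
    intro l hel hl
    have hle : ∀ m, Function.update S l (S l \ {e}) m ⊆ S m := by
      intro m
      by_cases hm : m = l
      · subst hm
        simp
      · simp [hm]
    refine ih _ ?_ _ (fun m => (hle m).trans (hSA m)) hl rfl
    refine Finset.sum_lt_sum (fun m _ => ncard_le_ncard (hle m) (hA.subset (hSA m)))
      ⟨l, Finset.mem_univ _, ?_⟩
    rw [Function.update_self]
    exact ncard_sdiff_singleton_lt_of_mem hel (hA.subset (hSA l))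
  rcases exists_deletion hfin hA hS hij (e := e) with h | h
  · exact step i hei h
  · exact step j hej h

/-- The easy inequality, for a single choice of independent sets and a single `X`. -/
lemma ncard_iUnion_le {α : Type*} {t : ℕ} {M : Fin t → Matroid α}
    (hfin : ∀ i, (M i).E.Finite) {A X : Set α} (hA : A.Finite) {B : Fin t → Set α}
    (hB : ∀ i, (M i).Indep (B i)) (hBA : ⋃ i, B i ⊆ A) :
    (⋃ i, B i).ncard ≤ ∑ i, matroidRank (M i) (X ∩ (M i).E) + (A \ X).ncard := by
  have h1 : ⋃ i, B i ⊆ (⋃ i, B i ∩ X) ∪ (A \ X) := by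
    intro x hx
    have hxA := hBA hx
    obtain ⟨i, hi⟩ := mem_iUnion.1 hx
    by_cases hxX : x ∈ X
    · exact Or.inl (mem_iUnion.2 ⟨i, hi, hxX⟩)
    · exact Or.inr ⟨hxA, hxX⟩
  have hBf : (⋃ i, B i ∩ X).Finite :=
    hA.subset ((iUnion_mono fun i => inter_subset_left).trans hBA)
  calc (⋃ i, B i).ncard ≤ ((⋃ i, B i ∩ X) ∪ (A \ X)).ncard :=
        ncard_le_ncard h1 (hBf.union hA.sdiff)
    _ ≤ (⋃ i, B i ∩ X).ncard + (A \ X).ncard := ncard_union_le _ _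
    _ ≤ _ := by
      gcongr
      refine (ncard_iUnion_le_of_fintype _).trans (Finset.sum_le_sum fun i _ => ?_)
      exact ncard_le_matroidRank (hfin i) ((hB i).subset inter_subset_left)
        fun x hx => ⟨hx.2, (hB i).subset_ground hx.1⟩

/-- **Matroid Union Theorem.** For matroids `M 1, …, M t` on finite ground sets
`E 1, …, E t`, the rank of a set `A ⊆ E 1 ∪ ⋯ ∪ E t` in the union matroid
(i.e. the maximum cardinality of a subset of `A` expressible as a union
`A 1 ∪ ⋯ ∪ A t` with each `A i` independent in `M i`) equals
`min_{X ⊆ A} (∑ i, rᵢ(X ∩ E i) + |A \ X|)`. -/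
theorem matroid_union_rank {α : Type*} {t : ℕ} (M : Fin t → Matroid α)
    (hfin : ∀ i, (M i).E.Finite) (A : Set α) (hA : A ⊆ ⋃ i, (M i).E) :
    sSup {n : ℕ | ∃ B : Fin t → Set α, (∀ i, (M i).Indep (B i)) ∧
        (⋃ i, B i) ⊆ A ∧ (⋃ i, B i).ncard = n} =
      sInf {m : ℕ | ∃ X ⊆ A,
        m = (∑ i, matroidRank (M i) (X ∩ (M i).E)) + (A \ X).ncard} := by
  have hAf : A.Finite := (finite_iUnion hfin).subset hA
  set L := {n : ℕ | ∃ B : Fin t → Set α, (∀ i, (M i).Indep (B i)) ∧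
        (⋃ i, B i) ⊆ A ∧ (⋃ i, B i).ncard = n} with hL
  set R := {m : ℕ | ∃ X ⊆ A,
        m = (∑ i, matroidRank (M i) (X ∩ (M i).E)) + (A \ X).ncard} with hR
  have hLR : ∀ n ∈ L, ∀ m ∈ R, n ≤ m := by
    rintro n ⟨B, hB, hBA, rfl⟩ m ⟨X, -, rfl⟩
    exact ncard_iUnion_le hfin hAf hB hBA
  have hRne : R.Nonempty := ⟨_, ∅, empty_subset _, rfl⟩
  have hLne : L.Nonempty := ⟨_, fun _ => ∅, fun i => (M i).empty_indep, by simp, rfl⟩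
  have hLb : BddAbove L := ⟨sInf R, fun n hn => hLR n hn _ (Nat.sInf_mem hRne)⟩
  apply le_antisymm
  · exact csSup_le hLne fun n hn => hLR n hn _ (Nat.sInf_mem hRne)
  have hS : Supports M A (sInf R) (fun _ => A) := by
    intro Y hY
    have h1 : sInf R ≤ _ := Nat.sInf_le ⟨Y, hY, rfl⟩
    have h2 := ncard_sdiff_add_ncard_of_subset hY hAf
    simp only [matroidRank_inter_ground (hfin _)] at h1
    simp only [inter_eq_self_of_subset_right hY]
    omega
  obtain ⟨T, hTA, hT, hdisj⟩ := exists_disjoint_supports hfin hAf _ (fun _ => subset_rfl) hS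
  choose B hBT hB hBr using fun i => exists_indep_ncard_eq_matroidRank (hfin i) (T i)
  have hcard : (⋃ i, B i).ncard = ∑ i, matroidRank (M i) (T i) := by
    rw [ncard_iUnion_of_finite (fun i => hAf.subset ((hBT i).trans (hTA i)))
      (fun i j hij => (hdisj hij).mono (hBT i) (hBT j)), finsum_eq_sum_of_fintype]
    exact Finset.sum_congr rfl fun i _ => hBr i
  have hk := hT A subset_rfl
  simp only [inter_eq_self_of_subset_left (hTA _)] at hk
  have hle : sInf R ≤ (⋃ i, B i).ncard := by omega
  exact hle.trans (le_csSup hLb ⟨B, hB, iUnion_subset fun i => (hBT i).trans (hTA i), rfl⟩)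
end

section
/- Let $t \geq k \geq 1$ and let $N_1, N_2, \ldots, N_t$ be matroids on the same finite ground set $E$ satisfying $\chi(N_i) \leq k$ for all $i = 1, 2, \ldots, t$. Suppose that to each element $e \in E$ a list $L(e) \subseteq \{1, 2, \ldots, t\}$ with $|L(e)| = k$ is assigned. Then there is a coloring $f : E \to \{1, 2, \ldots, t\}$ such that (i) $f(e) \in L(e)$ for every $e \in E$, and (ii) $f^{-1}(i)$ is independent in $N_i$ for all $i = 1, 2, \ldots, t$. -/
/-!
The statement is an instance of the covering form of the matroid union theorem, proved here in the
manner of Rado's theorem. Write `r i` for the rank function of `N i`.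

* Since `N i` splits into `k` independent sets, `|X| ≤ k * r i X` for every `X ⊆ E`
  (`card_le_mul_eRk_toNat`). Applying this to `{e ∈ A | i ∈ L e}` and counting the pairs `(e, i)`
  with `i ∈ L e` twice gives the Rado condition `|A| ≤ ∑ i, r i {e ∈ A | i ∈ L e}`, for all `A ⊆ E`.
* As long as some list contains two colors `i ≠ j`, one of them can be removed without destroying
  the Rado condition: if both removals failed, with witnesses `A` and `B`, submodularity of the
  ranks would contradict the condition for `A ∪ B` and `(A ∩ B) \ {e}`. Hence all lists
  shrink to singletons, which defines `f` (`exists_selection_of_rado`).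
* For singleton lists the Rado condition for `E` reads `∑ i, |f⁻¹ i| ≤ ∑ i, r i (f⁻¹ i)`, so
  every color class has full rank, i.e. is independent.
-/

/-- Shrinking step of Rado's theorem: for monotone submodular `r i`, one of two distinct colors
can be removed from a list while preserving the Rado condition. -/
theorem rado_shrink {α ι : Type*} [DecidableEq α] [DecidableEq ι] [Fintype ι]
    (r : ι → Finset α → ℕ) (hmono : ∀ i, Monotone (r i))
    (hsub : ∀ i X Y, r i (X ∩ Y) + r i (X ∪ Y) ≤ r i X + r i Y)
    (E : Finset α) (L : α → Finset ι)
    (hL : ∀ A ⊆ E, A.card ≤ ∑ i, r i {e ∈ A | i ∈ L e})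
    (e : α) (i j : ι) (hij : i ≠ j) :
    (∀ A ⊆ E, A.card ≤ ∑ l, r l {x ∈ A | l ∈ Function.update L e ((L e).erase i) x}) ∨
    (∀ A ⊆ E, A.card ≤ ∑ l, r l {x ∈ A | l ∈ Function.update L e ((L e).erase j) x}) := by
  by_contra! h
  obtain ⟨⟨A, hAE, hA⟩, B, hBE, hB⟩ := h
  -- A violating set contains `e`, since otherwise the modification of the list is invisible.
  have key : ∀ (s : Finset ι) (A : Finset α), A ⊆ E →
      ∑ l, r l {x ∈ A | l ∈ Function.update L e s x} < A.card → e ∈ A := by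
    intro s A hAE hA
    by_contra he
    refine absurd (hL A hAE) (not_le.2 (lt_of_eq_of_lt ?_ hA))
    refine Finset.sum_congr rfl fun l _ => congrArg _ (Finset.filter_congr fun x hx => ?_)
    rw [Function.update_of_ne (by rintro rfl; exact he hx)]
  have heA := key _ A hAE hA
  have heB := key _ B hBE hB
  have h1 := hL (A ∪ B) (Finset.union_subset hAE hBE)
  have h2 := hL ((A ∩ B).erase e)
    ((Finset.erase_subset _ _).trans (Finset.inter_subset_left.trans hAE))
  have h3 : ∑ l, r l {x ∈ (A ∩ B).erase e | l ∈ L x} + ∑ l, r l {x ∈ A ∪ B | l ∈ L x} ≤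
      ∑ l, r l {x ∈ A | l ∈ Function.update L e ((L e).erase i) x} +
      ∑ l, r l {x ∈ B | l ∈ Function.update L e ((L e).erase j) x} := by
    rw [← Finset.sum_add_distrib, ← Finset.sum_add_distrib]
    refine Finset.sum_le_sum fun l _ => le_trans (add_le_add ?_ ?_) (hsub l _ _)
    · apply hmono
      intro x
      simp only [Finset.mem_filter, Finset.mem_erase, Finset.mem_inter]
      rintro ⟨⟨hxe, hxA, hxB⟩, hl⟩
      simp [Function.update_of_ne hxe, hxA, hxB, hl]
    · apply hmono
      intro x
      simp only [Finset.mem_filter, Finset.mem_union]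
      rintro ⟨hx, hl⟩
      by_cases hxe : x = e
      · subst hxe
        by_cases hli : l = i
        · right
          subst hli
          simp [heB, hl, hij]
        · left
          simp [heA, hl, hli]
      · simpa [Function.update_of_ne hxe, hl] using hx
  have h4 := Finset.card_union_add_card_inter A B
  have h5 := Finset.card_erase_add_one (Finset.mem_inter.2 ⟨heA, heB⟩)
  omega

/-- Rado's theorem for monotone submodular functions vanishing at `∅`, in list form: under the Rado
condition the lists can be shrunk to singletons while preserving the condition. -/
theorem exists_selection_of_rado {α ι : Type*} [DecidableEq α] [DecidableEq ι] [Fintype ι]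
    [Nonempty ι] (r : ι → Finset α → ℕ) (hmono : ∀ i, Monotone (r i)) (hempty : ∀ i, r i ∅ = 0)
    (hsub : ∀ i X Y, r i (X ∩ Y) + r i (X ∪ Y) ≤ r i X + r i Y)
    (E : Finset α) (L : α → Finset ι)
    (hL : ∀ A ⊆ E, A.card ≤ ∑ i, r i {e ∈ A | i ∈ L e}) :
    ∃ f : α → ι, (∀ e ∈ E, f e ∈ L e) ∧ ∀ A ⊆ E, A.card ≤ ∑ i, r i {e ∈ A | f e = i} := by
  induction hn : ∑ e ∈ E, (L e).card using Nat.strong_induction_on generalizing L with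
  | _ n ih =>
  by_cases hcard : ∀ e ∈ E, (L e).card ≤ 1
  · have hne : ∀ e ∈ E, ∃ i, L e = {i} := by
      intro e he
      rw [← Finset.card_eq_one]
      refine le_antisymm (hcard e he) (Finset.card_pos.2 ?_)
      by_contra h0
      rw [Finset.not_nonempty_iff_eq_empty] at h0
      have := hL {e} (by simpa using he)
      simp [Finset.filter_singleton, h0, hempty] at this
    have : ∀ e, ∃ i, e ∈ E → L e = {i} := by
      intro e
      by_cases he : e ∈ E
      · obtain ⟨i, hi⟩ := hne e he
        exact ⟨i, fun _ => hi⟩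
      · exact ⟨Classical.arbitrary ι, fun h => absurd h he⟩
    choose f hf using this
    refine ⟨f, fun e he => by simp [hf e he], fun A hA => (hL A hA).trans_eq ?_⟩
    refine Finset.sum_congr rfl fun l _ => congrArg _ (Finset.filter_congr fun x hx => ?_)
    rw [hf x (hA hx), Finset.mem_singleton, eq_comm]
  · push Not at hcard
    obtain ⟨e, he, hcard⟩ := hcard
    obtain ⟨i, hi, j, hj, hij⟩ := Finset.one_lt_card.1 hcard
    have step : ∀ l ∈ L e,
        (∀ A ⊆ E, A.card ≤ ∑ m, r m {x ∈ A | m ∈ Function.update L e ((L e).erase l) x}) →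
        ∃ f : α → ι, (∀ e ∈ E, f e ∈ L e) ∧
          ∀ A ⊆ E, A.card ≤ ∑ i, r i {e ∈ A | f e = i} := by
      intro l hl hL'
      have hle : ∀ x, Function.update L e ((L e).erase l) x ⊆ L x := by
        intro x
        by_cases hx : x = e
        · subst hx
          simp [Finset.erase_subset]
        · simp [Function.update_of_ne hx]
      obtain ⟨f, hf, hf'⟩ := ih _ (by
        rw [← hn]
        refine Finset.sum_lt_sum (fun x _ => Finset.card_le_card (hle x)) ⟨e, he, ?_⟩
        rw [Function.update_self]
        exact Finset.card_erase_lt_of_mem hl) _ hL' rfl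
      exact ⟨f, fun x hx => hle x (hf x hx), hf'⟩
    rcases rado_shrink r hmono hsub E L hL e i j hij with h | h
    · exact step i hi h
    · exact step j hj h

theorem card_le_eRk_toNat {α : Type*} (M : Matroid α) (X Y : Finset α)
    (hX : M.Indep X) (hXY : X ⊆ Y) : X.card ≤ (M.eRk Y).toNat := by
  have h := hX.encard_le_eRk_of_subset (Finset.coe_subset.2 hXY)
  rw [Set.encard_coe_eq_coe_finsetCard] at h
  have := ENat.toNat_le_toNat h (Matroid.eRk_ne_top_iff.2 (M.isRkFinite_of_finite Y.finite_toSet))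
  simpa using this

theorem card_le_mul_eRk_toNat {α : Type*} {k : ℕ} (M : Matroid α) (E : Set α) (c : α → Fin k)
    (hc : ∀ j : Fin k, M.Indep (E ∩ c ⁻¹' {j})) (X : Finset α) (hX : (X : Set α) ⊆ E) :
    X.card ≤ k * (M.eRk X).toNat := by
  classical
  rw [Finset.card_eq_sum_card_fiberwise (f := c) (t := Finset.univ) (by simp [Set.MapsTo])]
  refine (Finset.sum_le_card_nsmul _ _ (M.eRk X).toNat fun j _ => ?_).trans_eq (by simp)
  refine card_le_eRk_toNat M _ X ((hc j).subset ?_) (Finset.filter_subset _ _)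
  intro x hx
  simp only [Finset.coe_filter, Set.mem_ofPred_eq] at hx
  exact ⟨hX hx.1, hx.2⟩

/-- Let `t ≥ k ≥ 1` and let `N 1, …, N t` be matroids on the same finite ground
set `E`, each with chromatic number at most `k`. If every element `e ∈ E` is
assigned a list `L e ⊆ {1, …, t}` of size `k`, then there is a coloring
`f : E → {1, …, t}` with `f e ∈ L e` for all `e ∈ E` and each color class
`f ⁻¹ i` independent in `N i`. -/
theorem matroid_system_list_coloring {α : Type*} {t k : ℕ} (htk : k ≤ t) (hk : 1 ≤ k)
    (N : Fin t → Matroid α) (E : Set α) (hE : ∀ i, (N i).E = E) (hfin : E.Finite)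
    (hchrom : ∀ i, ∃ c : α → Fin k, ∀ j : Fin k, (N i).Indep (E ∩ c ⁻¹' {j}))
    (L : α → Finset (Fin t)) (hL : ∀ e ∈ E, (L e).card = k) :
    ∃ f : α → Fin t, (∀ e ∈ E, f e ∈ L e) ∧
      ∀ i : Fin t, (N i).Indep (E ∩ f ⁻¹' {i}) := by
  classical
  have : Nonempty (Fin t) := ⟨⟨0, by omega⟩⟩
  lift E to Finset α using hfin
  have hfinite : ∀ i (X : Finset α), (N i).eRk X ≠ ⊤ := fun i X =>
    Matroid.eRk_ne_top_iff.2 ((N i).isRkFinite_of_finite X.finite_toSet)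
  obtain ⟨f, hf, hfr⟩ := exists_selection_of_rado (fun i X => ((N i).eRk X).toNat)
    (fun i X Y hXY => ENat.toNat_le_toNat ((N i).eRk_mono (Finset.coe_subset.2 hXY)) (hfinite i Y))
    (by simp)
    (fun i X Y => by
      have h := (N i).eRk_inter_add_eRk_union_le X Y
      rw [← Finset.coe_inter, ← Finset.coe_union] at h
      have h' := ENat.toNat_le_toNat h (by simp [hfinite])
      rwa [ENat.toNat_add (hfinite _ _) (hfinite _ _),
        ENat.toNat_add (hfinite _ _) (hfinite _ _)] at h')
    E L (fun A hA => by
      refine Nat.le_of_mul_le_mul_left ?_ hk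
      calc k * A.card = ∑ e ∈ A, (L e).card := by
            rw [Finset.sum_congr rfl fun e he => hL e (hA he)]
            simp [mul_comm]
        _ = ∑ i, ({e ∈ A | i ∈ L e} : Finset α).card := by
            have := Finset.sum_card_bipartiteAbove_eq_sum_card_bipartiteBelow
              (s := A) (t := Finset.univ) (fun e i => i ∈ L e)
            simpa [Finset.bipartiteAbove, Finset.bipartiteBelow] using this
        _ ≤ ∑ i, k * ((N i).eRk ({e ∈ A | i ∈ L e} : Finset α)).toNat := by
            refine Finset.sum_le_sum fun i _ => ?_
            obtain ⟨c, hc⟩ := hchrom i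
            exact card_le_mul_eRk_toNat (N i) E c hc _
              (Finset.coe_subset.2 ((Finset.filter_subset _ _).trans hA))
        _ = _ := by rw [Finset.mul_sum])
  refine ⟨f, hf, fun i => ?_⟩
  have hle : ∀ i ∈ Finset.univ, ((N i).eRk ({e ∈ E | f e = i} : Finset α)).toNat ≤
      ({e ∈ E | f e = i} : Finset α).card := by
    intro i _
    have := ENat.toNat_le_toNat ((N i).eRk_le_encard ({e ∈ E | f e = i} : Finset α))
      (by rw [Set.encard_coe_eq_coe_finsetCard]; exact ENat.natCast_ne_top _)
    rwa [Set.encard_coe_eq_coe_finsetCard, ENat.toNat_natCast] at this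
  have hsum := hfr E subset_rfl
  rw [Finset.card_eq_sum_card_fiberwise (f := f) (t := Finset.univ) (by simp [Set.MapsTo])] at hsum
  have heq := (Finset.sum_eq_sum_iff_of_le hle).1
    (le_antisymm (Finset.sum_le_sum hle) hsum) i (Finset.mem_univ i)
  have hset : (E : Set α) ∩ f ⁻¹' {i} = ({e ∈ E | f e = i} : Finset α) := by
    ext x
    simp
  rw [hset, Matroid.indep_iff_eRk_eq_encard_of_finite (Finset.finite_toSet _),
    Set.encard_coe_eq_coe_finsetCard, ← heq, ENat.natCast_toNat (hfinite _ _)]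
end

section
/- Every system of $k$ matroids $M_1, M_2, \ldots, M_k$ on the same finite ground set $E$, with $\chi(M_i) \leq k$ for all $i$, has a cooperative coloring: there exists a coloring $c : E \to \{1, 2, \ldots, k\}$ such that for every color $j$, the set $c^{-1}(j)$ of elements colored $j$ is independent in $M_j$. -/
/-!
A coloring of `E` is a choice, for every `e ∈ E`, of an element `(e, c e)` of the fiber
`{e} × Fin k`. It is cooperative as soon as the chosen set is independent in the direct sum of the
`M j`, whose rank function is `f A = ∑ j, r_j {e | (e, j) ∈ A}`. By Rado's theorem such a
transversal exists if `|J| ≤ f (J × Fin k) = ∑ j, r_j J` for all `J ⊆ E`. This inequality holds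
since `J` is a union of `k` sets independent in `M j`, so that `|J| ≤ k * r_j J` for each `j`.

Rado's theorem is proved in Welsh's form, for a monotone submodular function
(`exists_transversal_of_submodular`): as long as some set of the family has two elements, one of
them can be discarded without destroying Rado's condition.
-/

/-- The reduction step of Rado's theorem: if `x ≠ y` and Rado's condition holds for `S`, it still
holds after deleting from `S e` at least one of `x` and `y`. -/
lemma rado_condition_erase {ι β : Type*} [DecidableEq ι] [DecidableEq β]
    (f : Finset β → ℕ) (hmono : Monotone f)
    (hsub : ∀ A B, f (A ∩ B) + f (A ∪ B) ≤ f A + f B) (E : Finset ι) (S : ι → Finset β)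
    (hS : ∀ J ⊆ E, J.card ≤ f (J.biUnion S)) (e : ι) {x y : β} (hxy : x ≠ y) :
    (∀ J ⊆ E, J.card ≤ f (J.biUnion (Function.update S e ((S e).erase x)))) ∨
    (∀ J ⊆ E, J.card ≤ f (J.biUnion (Function.update S e ((S e).erase y)))) := by
  -- a violating set of indices contains `e`, as otherwise its union is unchanged
  have hmem : ∀ (z : β) (J : Finset ι), J ⊆ E →
      f (J.biUnion (Function.update S e ((S e).erase z))) < J.card → e ∈ J := by
    intro z J hJ hlt
    by_contra he
    have : J.biUnion (Function.update S e ((S e).erase z)) = J.biUnion S := by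
      refine Finset.biUnion_congr rfl fun i hi => ?_
      rw [Function.update_of_ne (ne_of_mem_of_not_mem hi he)]
    rw [this] at hlt
    exact absurd (hS J hJ) (by omega)
  by_contra! hcon
  obtain ⟨⟨J, hJ, hJlt⟩, ⟨K, hK, hKlt⟩⟩ := hcon
  have heJ := hmem x J hJ hJlt
  have heK := hmem y K hK hKlt
  set A := J.biUnion (Function.update S e ((S e).erase x)) with hA
  set B := K.biUnion (Function.update S e ((S e).erase y)) with hB
  -- an element of `S e` differs from `x` or from `y`, so it survives in `A` or in `B`
  have h1 : (J ∪ K).biUnion S ⊆ A ∪ B := by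
    intro b hb
    simp only [Finset.mem_biUnion, Finset.mem_union, hA, hB] at hb ⊢
    obtain ⟨i, hi, hbi⟩ := hb
    by_cases hie : i = e
    · subst hie
      by_cases hbx : b = x
      · exact Or.inr ⟨i, heK, by simp [hbi, hbx ▸ hxy]⟩
      · exact Or.inl ⟨i, heJ, by simp [hbi, hbx]⟩
    · rcases hi with hi | hi
      · exact Or.inl ⟨i, hi, by simpa [hie] using hbi⟩
      · exact Or.inr ⟨i, hi, by simpa [hie] using hbi⟩
  have h2 : ((J ∩ K).erase e).biUnion S ⊆ A ∩ B := by
    intro b hb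
    simp only [Finset.mem_biUnion, Finset.mem_inter, Finset.mem_erase, hA, hB] at hb ⊢
    obtain ⟨i, ⟨hie, hiJ, hiK⟩, hbi⟩ := hb
    exact ⟨⟨i, hiJ, by simpa [hie] using hbi⟩, ⟨i, hiK, by simpa [hie] using hbi⟩⟩
  have h3 := (hS _ (Finset.union_subset hJ hK)).trans (hmono h1)
  have h4 := (hS _ (((J ∩ K).erase_subset e).trans (Finset.inter_subset_left.trans hJ))).trans
    (hmono h2)
  rw [Finset.card_erase_of_mem (Finset.mem_inter.2 ⟨heJ, heK⟩)] at h4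
  have h5 := Finset.card_union_add_card_inter J K
  have h6 := hsub A B
  omega

/-- Rado's theorem for a monotone submodular function `f`. Every `S i` is assumed nonempty, also
for `i ∉ E`, so that the transversal can be a total function. -/
lemma exists_transversal_of_submodular {ι β : Type*} [DecidableEq ι] [DecidableEq β]
    (f : Finset β → ℕ) (hmono : Monotone f)
    (hsub : ∀ A B, f (A ∩ B) + f (A ∪ B) ≤ f A + f B) (E : Finset ι) (S : ι → Finset β)
    (hne : ∀ i, (S i).Nonempty) (hS : ∀ J ⊆ E, J.card ≤ f (J.biUnion S)) :
    ∃ t : ι → β, (∀ i, t i ∈ S i) ∧ ∀ J ⊆ E, J.card ≤ f (J.image t) := by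
  induction hn : ∑ i ∈ E, (S i).card using Nat.strong_induction_on generalizing S with
  | _ n ih =>
    by_cases h : ∃ e ∈ E, 1 < (S e).card
    · obtain ⟨e, he, hcard⟩ := h
      obtain ⟨x, hx, y, hy, hxy⟩ := Finset.one_lt_card.1 hcard
      have key : ∀ z ∈ S e,
          (∀ J ⊆ E, J.card ≤ f (J.biUnion (Function.update S e ((S e).erase z)))) →
          ∃ t : ι → β, (∀ i, t i ∈ S i) ∧ ∀ J ⊆ E, J.card ≤ f (J.image t) := by
        intro z hz hR
        have hle : ∀ i, Function.update S e ((S e).erase z) i ⊆ S i := by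
          intro i
          by_cases hie : i = e
          · subst hie; simpa using Finset.erase_subset z (S i)
          · simp [hie]
        obtain ⟨t, ht, htJ⟩ := ih (∑ i ∈ E, (Function.update S e ((S e).erase z) i).card) (by
            rw [← hn]
            refine Finset.sum_lt_sum (fun i _ => Finset.card_le_card (hle i)) ⟨e, he, ?_⟩
            simpa using Finset.card_erase_lt_of_mem hz)
          (Function.update S e ((S e).erase z)) (by
            intro i
            by_cases hie : i = e
            · subst hie
              rw [Function.update_self, ← Finset.card_pos, Finset.card_erase_of_mem hz]
              omega
            · simpa [hie] using hne i) hR rfl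
        exact ⟨t, fun i => hle i (ht i), htJ⟩
      exact (rado_condition_erase f hmono hsub E S hS e hxy).elim (key x hx) (key y hy)
    · push Not at h
      choose t ht using hne
      refine ⟨t, ht, fun J hJ => (hS J hJ).trans (hmono fun b hb => ?_)⟩
      obtain ⟨i, hi, hbi⟩ := Finset.mem_biUnion.1 hb
      exact Finset.mem_image.2 ⟨i, hi, Finset.card_le_one.1 (h i (hJ hi)) _ (ht i) _ hbi⟩

/-- Every system of `k` matroids `M 1, …, M k` on the same finite ground set
`E`, each with chromatic number at most `k`, has a cooperative coloring:
a coloring `c : E → {1, …, k}` such that for each color `j`, the set of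
elements colored `j` is independent in `M j`. -/
theorem matroid_cooperative_coloring {α : Type*} {k : ℕ} (hk : 1 ≤ k)
    (M : Fin k → Matroid α) (E : Set α) (hE : ∀ i, (M i).E = E) (hfin : E.Finite)
    (hchrom : ∀ i, ∃ c : α → Fin k, ∀ j : Fin k, (M i).Indep (E ∩ c ⁻¹' {j})) :
    ∃ c : α → Fin k, ∀ j : Fin k, (M j).Indep (E ∩ c ⁻¹' {j}) := by
  classical
  have hne : ∀ j X, (M j).eRk X ≠ ⊤ := by
    intro j X
    rw [← Matroid.eRk_inter_ground]
    exact ne_top_of_le_ne_top ((hE j ▸ hfin).subset Set.inter_subset_right).encard_lt_top.ne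
      ((M j).eRk_le_encard _)
  -- no rank is `⊤`, so the ranks can be taken in `ℕ`
  obtain ⟨r, hr⟩ : ∃ r : Fin k → Set α → ℕ, ∀ j X, (r j X : ℕ∞) = (M j).eRk X :=
    ⟨fun j X => ((M j).eRk X).toNat, fun j X => ENat.natCast_toNat (hne j X)⟩
  have rmono : ∀ j, Monotone (r j) := by
    intro j X Y hXY
    have := (M j).eRk_mono hXY
    rw [← hr, ← hr] at this
    exact_mod_cast this
  have rsub : ∀ j X Y, r j (X ∩ Y) + r j (X ∪ Y) ≤ r j X + r j Y := by
    intro j X Y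
    have := (M j).eRk_inter_add_eRk_union_le X Y
    simp only [← hr] at this
    exact_mod_cast this
  have rempty : ∀ j, r j ∅ = 0 := by
    intro j
    have := (M j).eRk_empty
    rw [← hr] at this
    exact_mod_cast this
  obtain ⟨F, rfl⟩ : ∃ F : Finset α, E = F := ⟨hfin.toFinset, by simp⟩
  have hcover : ∀ j, ∀ J ⊆ F, J.card ≤ k * r j J := by
    intro j J hJ
    obtain ⟨c, hc⟩ := hchrom j
    have hcol : ∀ i, (J.filter (fun e => c e = i)).card ≤ r j J := by
      intro i
      have hI : (M j).Indep (J.filter (fun e => c e = i) : Finset α) := by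
        refine (hc i).subset fun e he => ?_
        simp only [Finset.coe_filter, Set.mem_ofPred_eq] at he
        exact ⟨hJ he.1, he.2⟩
      have := hI.encard_le_eRk_of_subset (X := J)
        (Finset.coe_subset.2 (Finset.filter_subset _ _))
      rw [← hr, Set.encard_coe_eq_coe_finsetCard] at this
      exact_mod_cast this
    rw [Finset.card_eq_sum_card_fiberwise (f := c) (t := Finset.univ) (by simp)]
    exact (Finset.sum_le_sum fun i _ => hcol i).trans (by simp)
  have hsum : ∀ J ⊆ F, J.card ≤ ∑ j, r j J := by
    intro J hJ
    refine le_of_mul_le_mul_left (a := k) ?_ hk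
    calc k * J.card = ∑ _j : Fin k, J.card := by simp
      _ ≤ ∑ j, k * r j J := Finset.sum_le_sum fun j _ => hcover j J hJ
      _ = k * ∑ j, r j J := by rw [Finset.mul_sum]
  obtain ⟨t, ht, htJ⟩ := exists_transversal_of_submodular
    (fun A : Finset (α × Fin k) => ∑ j, r j {e | (e, j) ∈ A})
    (fun A B hAB => Finset.sum_le_sum fun j _ => rmono j fun e he => hAB he)
    (fun A B => by
      simp only [← Finset.sum_add_distrib]
      refine Finset.sum_le_sum fun j _ => ?_
      have hunion : {e | (e, j) ∈ A ∪ B} = {e | (e, j) ∈ A} ∪ {e | (e, j) ∈ B} := by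
        ext e; exact Finset.mem_union
      have hinter : {e | (e, j) ∈ A ∩ B} = {e | (e, j) ∈ A} ∩ {e | (e, j) ∈ B} := by
        ext e; exact Finset.mem_inter
      rw [hunion, hinter]
      exact rsub j _ _)
    F (fun e => Finset.univ.image fun j => (e, j))
    (fun e => ⟨(e, ⟨0, hk⟩), by simp⟩)
    (fun J hJ => by
      refine (hsum J hJ).trans (Finset.sum_le_sum fun j _ => rmono j fun e he => ?_)
      simpa using he)
  have htfst : ∀ e, (t e).1 = e := by
    intro e
    obtain ⟨j, -, hj⟩ := Finset.mem_image.1 (ht e)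
    rw [← hj]
  refine ⟨fun e => (t e).2, fun j => ?_⟩
  set J := F.filter (fun e => (t e).2 = j) with hJdef
  have hJE : (F : Set α) ∩ (fun e => (t e).2) ⁻¹' {j} = J := by
    ext e; simp [hJdef]
  rw [hJE]
  have hcard : J.card ≤ r j J := by
    refine (htJ J (Finset.filter_subset _ _)).trans ?_
    -- all of `J` has color `j`, so only the `j`-th summand of the rank survives
    have hmem : ∀ i e, (e, i) ∈ J.image t → e ∈ J ∧ i = j := by
      intro i e he
      obtain ⟨e', he', h⟩ := Finset.mem_image.1 he
      have h1 : e' = e := by rw [← htfst e', h]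
      have h2 := (Finset.mem_filter.1 he').2
      rw [h] at h2
      exact ⟨h1 ▸ he', h2⟩
    rw [Finset.sum_eq_single j]
    · exact rmono j fun e he => (hmem j e he).1
    · intro i _ hij
      rw [← rempty i]
      congr 1
      ext e
      simp only [Set.mem_ofPred_eq, Set.mem_empty_iff_false, iff_false]
      exact fun he => hij (hmem i e he).2
    · simp
  obtain ⟨I, hIJ, hI, hIcard⟩ := Matroid.le_eRk_iff.1 (hr j J).le
  have : I = J := by
    refine (J.finite_toSet.subset hIJ).eq_of_subset_of_encard_le hIJ ?_
    rw [hIcard, Set.encard_coe_eq_coe_finsetCard]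
    exact_mod_cast hcard
  exact this ▸ hI
end

section
/- Let $M$ be a matroid without loops on a finite ground set $E$ with $\chi(M) \leq 2$, and let $\pi$ be any permutation of $E$. Then there exists a set $F \subseteq E$ such that $F$ is independent in $M$ and the image $\pi(E \setminus F)$ is also independent in $M$. (In particular, if $G$ is a simple graph with edge set $E$ and arboricity $2$, then for every permutation $\pi$ of $E$ there is a forest $F$ in $G$ such that $\pi(E \setminus F)$ is also a forest in $G$.) -/
/-!
The claim is a covering statement for two matroids, `M` and its pullback along `π`, and follows from
the rank criterion: a finite set can be covered by an independent set of each as soon as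
`|X| ≤ r₁(X) + r₂(X)` for all its subsets `X`. The criterion holds here because `X` and `π '' X` have
the same size and each is a union of two independent sets, so each has rank at least `|X| / 2`.

`exists_cover_of_submodular` proves the criterion for arbitrary submodular functions by placing the
elements one at a time. If neither side can accept the next element `e`, two sets `X` and `Y` witness
the failures, and submodularity applied to `X` and `Y` contradicts the criterion for
`X ∩ Y` and `X ∪ Y ∪ {e}`.
-/

/-- Matroid-union criterion for two submodular functions `f` and `g`. The sets `I` and `J` hold the
elements already assigned to each side and `U` those still unassigned; adding `I` and `J` inside `f`
and `g` plays the role of contracting them. -/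
theorem exists_cover_of_submodular {α : Type*} [DecidableEq α] (f g : Finset α → ℕ)
    (hf : ∀ A B, f (A ∩ B) + f (A ∪ B) ≤ f A + f B)
    (hg : ∀ A B, g (A ∩ B) + g (A ∪ B) ≤ g A + g B) (U : Finset α) :
    ∀ I J : Finset α, (∀ X ⊆ U, X.card + I.card + J.card ≤ f (X ∪ I) + g (X ∪ J)) →
      ∃ I' J' : Finset α, U ∪ I ∪ J ⊆ I' ∪ J' ∧ I'.card + J'.card ≤ f I' + g J' := by
  induction U using Finset.induction_on with
  | empty =>
    intro I J h
    exact ⟨I, J, by simp, by simpa using h ∅ (Finset.Subset.refl _)⟩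
  | insert e U he ih =>
    intro I J h
    by_cases h1 : ∀ X ⊆ U,
        X.card + (insert e I).card + J.card ≤ f (X ∪ insert e I) + g (X ∪ J)
    · obtain ⟨I', J', hs, hc⟩ := ih _ _ h1
      exact ⟨I', J', by grind, hc⟩
    by_cases h2 : ∀ X ⊆ U,
        X.card + I.card + (insert e J).card ≤ f (X ∪ I) + g (X ∪ insert e J)
    · obtain ⟨I', J', hs, hc⟩ := ih _ _ h2
      exact ⟨I', J', by grind, hc⟩
    exfalso
    push Not at h1 h2
    obtain ⟨X, hX, hXc⟩ := h1
    obtain ⟨Y, hY, hYc⟩ := h2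
    have hi := Finset.card_insert_le e I
    have hj := Finset.card_insert_le e J
    have hcap := h (X ∩ Y) (by grind)
    have hcup := h (insert e (X ∪ Y)) (by grind)
    rw [Finset.card_insert_of_notMem (by grind)] at hcup
    have hcard := Finset.card_union_add_card_inter X Y
    have hfs := hf (X ∪ insert e I) (Y ∪ I)
    have hgs := hg (X ∪ J) (Y ∪ insert e J)
    rw [show (X ∪ insert e I) ∩ (Y ∪ I) = X ∩ Y ∪ I by grind,
      show (X ∪ insert e I) ∪ (Y ∪ I) = insert e (X ∪ Y) ∪ I by grind] at hfs
    rw [show (X ∪ J) ∩ (Y ∪ insert e J) = X ∩ Y ∪ J by grind,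
      show (X ∪ J) ∪ (Y ∪ insert e J) = insert e (X ∪ Y) ∪ J by grind] at hgs
    omega

/-- The matroid rank of a finite set as a natural number. -/
noncomputable def finsetRk {α : Type*} (M : Matroid α) (X : Finset α) : ℕ :=
  (M.eRk (X : Set α)).toNat

section finsetRk

variable {α : Type*} (M : Matroid α)

theorem coe_finsetRk (X : Finset α) : (finsetRk M X : ℕ∞) = M.eRk (X : Set α) :=
  ENat.natCast_toNat (ne_top_of_le_ne_top (by simp) (M.eRk_le_encard (X : Set α)))

theorem finsetRk_le_card (X : Finset α) : finsetRk M X ≤ X.card := by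
  have h := M.eRk_le_encard (X : Set α)
  rw [← coe_finsetRk, Set.encard_coe_eq_coe_finsetCard] at h
  exact_mod_cast h

theorem finsetRk_mono {X Y : Finset α} (h : X ⊆ Y) : finsetRk M X ≤ finsetRk M Y := by
  have h := M.eRk_mono (Finset.coe_subset.2 h)
  rw [← coe_finsetRk, ← coe_finsetRk] at h
  exact_mod_cast h

theorem finsetRk_submodular [DecidableEq α] (X Y : Finset α) :
    finsetRk M (X ∩ Y) + finsetRk M (X ∪ Y) ≤ finsetRk M X + finsetRk M Y := by
  have h := M.eRk_inter_add_eRk_union_le (X : Set α) (Y : Set α)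
  rw [← Finset.coe_inter, ← Finset.coe_union] at h
  simp only [← coe_finsetRk] at h
  exact_mod_cast h

theorem card_le_finsetRk_iff (X : Finset α) :
    X.card ≤ finsetRk M X ↔ M.Indep (X : Set α) := by
  rw [Matroid.indep_iff_eRk_eq_encard_of_finite X.finite_toSet, ← coe_finsetRk,
    Set.encard_coe_eq_coe_finsetCard, Nat.cast_inj]
  exact ⟨fun h => le_antisymm (finsetRk_le_card M X) h, fun h => h.ge⟩

/-- One of the two colour classes contains at least half of `X`. -/
theorem card_le_two_mul_finsetRk {c : α → Fin 2}
    (hc : ∀ i : Fin 2, M.Indep (M.E ∩ c ⁻¹' {i})) {X : Finset α} (hX : (X : Set α) ⊆ M.E) :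
    X.card ≤ 2 * finsetRk M X := by
  have hclass (i : Fin 2) : (X.filter (c · = i)).card ≤ finsetRk M X := by
    refine le_trans ((card_le_finsetRk_iff M _).2 ((hc i).subset ?_))
      (finsetRk_mono M (Finset.filter_subset _ _))
    intro x hx
    simp only [Finset.coe_filter, Set.mem_ofPred_eq] at hx
    exact ⟨hX hx.1, hx.2⟩
  have hsum := Finset.card_eq_sum_card_fiberwise (f := c) (s := X) (t := Finset.univ)
    (fun _ _ => Finset.mem_coe.2 (Finset.mem_univ _))
  rw [Fin.sum_univ_two] at hsum
  have := hclass 0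
  have := hclass 1
  omega

end finsetRk

/-- Let `M` be a loopless matroid on a finite ground set `E` with `χ(M) ≤ 2`,
and let `π` be any permutation of `E`. Then there is a set `F ⊆ E` independent
in `M` such that `π '' (E \ F)` is also independent in `M`. -/
theorem matroid_two_colorable_permutation {α : Type*} (M : Matroid α)
    (hfin : M.E.Finite) (hloopless : ∀ e ∈ M.E, M.Indep {e})
    (hchrom : ∃ c : α → Fin 2, ∀ i : Fin 2, M.Indep (M.E ∩ c ⁻¹' {i}))
    (π : α → α) (hπ : Set.BijOn π M.E M.E) :
    ∃ F ⊆ M.E, M.Indep F ∧ M.Indep (π '' (M.E \ F)) := by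
  classical
  obtain ⟨c, hc⟩ := hchrom
  -- `π` need not be injective outside `M.E`; submodularity of the pulled-back rank
  -- only needs `π '' (A ∩ B) ⊆ π '' A ∩ π '' B` and monotonicity.
  have hg (A B : Finset α) : finsetRk M ((A ∩ B).image π) + finsetRk M ((A ∪ B).image π) ≤
      finsetRk M (A.image π) + finsetRk M (B.image π) := by
    have h1 := finsetRk_mono M (Finset.image_inter_subset π A B)
    have h2 := finsetRk_submodular M (A.image π) (B.image π)
    rw [Finset.image_union]
    omega
  obtain ⟨I, J, hIJ, hcard⟩ := exists_cover_of_submodular (finsetRk M)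
    (fun X => finsetRk M (X.image π)) (finsetRk_submodular M) hg hfin.toFinset ∅ ∅ (by
      intro X hX
      have hXE : (X : Set α) ⊆ M.E := fun x hx => hfin.mem_toFinset.1 (hX hx)
      have h1 := card_le_two_mul_finsetRk M hc hXE
      have h2 := card_le_two_mul_finsetRk M hc (X := X.image π) (by
        rw [Finset.coe_image]
        exact (Set.image_mono hXE).trans hπ.mapsTo.image_subset)
      rw [Finset.card_image_of_injOn (hπ.injOn.mono hXE)] at h2
      simp only [Finset.union_empty, Finset.card_empty]
      omega)
  have hI := finsetRk_le_card M I
  have hJ := finsetRk_le_card M (J.image π)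
  have hJc : (J.image π).card ≤ J.card := Finset.card_image_le
  -- Neither rank exceeds the corresponding size, so the inequality on sums splits.
  have hIind : M.Indep (I : Set α) := (card_le_finsetRk_iff M I).1 (by omega)
  have hJind : M.Indep (π '' (J : Set α)) := by
    rw [← Finset.coe_image]
    exact (card_le_finsetRk_iff M (J.image π)).1 (by omega)
  refine ⟨I, hIind.subset_ground, hIind, hJind.subset ?_⟩
  refine Set.image_mono fun x hx => ?_
  have hx' := hIJ (show x ∈ hfin.toFinset ∪ ∅ ∪ ∅ by simpa using hx.1)
  exact (Finset.mem_union.1 hx').resolve_left hx.2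
end

section
/- Let $M$ be a matroid without loops on a finite ground set $E$ with $\chi(M) \leq k$, and let $\pi_1, \ldots, \pi_{k-1}$ be permutations of $E$. Then there exists a partition of $E$ into sets $A_1, A_2, \ldots, A_k$ such that $A_1$ is independent in $M$ and $\pi_i(A_{i+1})$ is independent in $M$ for each $i = 1, \ldots, k-1$. -/
/-!
Put `σ₀ = id` and `σᵢ = πᵢ`, and let `rᵢ(X)` be the rank in `M` of the image `σᵢ(X)`. Every `Y ⊆ E` is
a union of `k` independent sets, so `|Y| ≤ k · r(Y)`; applied to `Y = σᵢ(X)` and summed over the `k` indices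
`i`, this gives `|X| ≤ ∑ᵢ rᵢ(X)` for every `X ⊆ E`. What remains is the sufficiency half of the
matroid partition theorem of Edmonds and Fulkerson, which Mathlib lacks.

It is proved in the style of Rado's proof of Hall's theorem (`exists_disjoint_of_card_le`). Among the
families `(Aᵢ)` with `|X| ≤ ∑ᵢ rᵢ(Aᵢ ∩ X)` for all `X ⊆ E`, take one with `∑ |Aᵢ|` minimal. If `e` were
in `Aᵢ ∩ Aⱼ` with `i ≠ j`, then deleting `e` from `Aᵢ` would break the inequality at some `X`, deleting
it from `Aⱼ` would break it at some `Y`, and submodularity would contradict the inequality at `X ∪ Y`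
or at `(X ∩ Y) \ {e}` (`card_le_erase_or`). So the minimal family is disjoint. Taking `X = {e}` shows
that it covers `E`, and taking `X = Aᵢ` gives `|Aᵢ| ≤ rᵢ(Aᵢ)`, so that `σᵢ(Aᵢ)` is independent.
-/

open Finset in
/-- For any two members of a family satisfying the rank inequality, an element `e` can be deleted from
at least one of them without destroying the inequality. -/
theorem card_le_erase_or {α ι : Type*} [DecidableEq α] [DecidableEq ι] [Fintype ι]
    (E : Finset α) (ρ : ι → Finset α → ℕ) (hmono : ∀ i, Monotone (ρ i))
    (hsub : ∀ i X Y, ρ i (X ∪ Y) + ρ i (X ∩ Y) ≤ ρ i X + ρ i Y)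
    (A : ι → Finset α) (hA : ∀ X ⊆ E, #X ≤ ∑ l, ρ l (A l ∩ X))
    {i j : ι} (hij : i ≠ j) (e : α) :
    (∀ X ⊆ E, #X ≤ ∑ l, ρ l (Function.update A i ((A i).erase e) l ∩ X)) ∨
    (∀ X ⊆ E, #X ≤ ∑ l, ρ l (Function.update A j ((A j).erase e) l ∩ X)) := by
  by_contra! hcon
  obtain ⟨⟨X, hXE, hX⟩, ⟨Y, hYE, hY⟩⟩ := hcon
  have key : ∀ (m : ι) (Z : Finset α), Z ⊆ E →
      ∑ l, ρ l (Function.update A m ((A m).erase e) l ∩ Z) < #Z → e ∈ Z := by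
    intro m Z hZE hZ
    by_contra he
    refine absurd (hA Z hZE) (not_le.2 (lt_of_le_of_lt (Finset.sum_le_sum fun l _ => hmono l ?_) hZ))
    intro x hx
    have hxe : x ≠ e := by rintro rfl; exact he (mem_inter.1 hx).2
    by_cases hl : l = m
    · subst hl; simpa [hxe] using hx
    · simpa [hl] using hx
  have heX := key i X hXE hX
  have heY := key j Y hYE hY
  have h1 := hA (X ∪ Y) (union_subset hXE hYE)
  have h2 := hA ((X ∩ Y).erase e) ((erase_subset _ _).trans (inter_subset_left.trans hXE))
  have hcard : #((X ∩ Y).erase e) + 1 = #(X ∩ Y) := card_erase_add_one (by simp [heX, heY])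
  have hcard2 := card_union_add_card_inter X Y
  have hsum : ∑ l, ρ l (A l ∩ (X ∪ Y)) + ∑ l, ρ l (A l ∩ ((X ∩ Y).erase e)) ≤
      ∑ l, ρ l (Function.update A i ((A i).erase e) l ∩ X) +
      ∑ l, ρ l (Function.update A j ((A j).erase e) l ∩ Y) := by
    rw [← sum_add_distrib, ← sum_add_distrib]
    refine sum_le_sum fun l _ => le_trans (add_le_add (hmono l ?_) (hmono l ?_)) (hsub l _ _)
    -- The point `e` survives in the union because `l` differs from one of `i` and `j`.
    all_goals
      intro x hx
      by_cases hli : l = i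
      · have hlj : l ≠ j := fun h => hij (hli.symm.trans h)
        subst hli
        by_cases hxe : x = e <;> simp_all
      · by_cases hlj : l = j
        · subst hlj
          by_cases hxe : x = e <;> simp_all
        · simp_all
  omega

open Finset in
/-- Any family satisfying the rank inequality can be shrunk to a disjoint one. -/
theorem exists_disjoint_of_card_le {α ι : Type*} [DecidableEq α] [Fintype ι]
    (E : Finset α) (ρ : ι → Finset α → ℕ) (hmono : ∀ i, Monotone (ρ i))
    (hsub : ∀ i X Y, ρ i (X ∪ Y) + ρ i (X ∩ Y) ≤ ρ i X + ρ i Y)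
    (A : ι → Finset α) (hAE : ∀ i, A i ⊆ E) (hA : ∀ X ⊆ E, #X ≤ ∑ l, ρ l (A l ∩ X)) :
    ∃ B : ι → Finset α, (∀ i, B i ⊆ E) ∧ (Pairwise fun i j => Disjoint (B i) (B j)) ∧
      ∀ X ⊆ E, #X ≤ ∑ l, ρ l (B l ∩ X) := by
  classical
  induction hn : ∑ l, #(A l) using Nat.strong_induction_on generalizing A with
  | _ n ih =>
    by_cases hd : Pairwise fun i j => Disjoint (A i) (A j)
    · exact ⟨A, hAE, hd, hA⟩
    simp only [Pairwise, not_forall] at hd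
    obtain ⟨i, j, hij, hd⟩ := hd
    obtain ⟨e, hei, hej⟩ := not_disjoint_iff.1 hd
    have step : ∀ m, e ∈ A m →
        (∀ X ⊆ E, #X ≤ ∑ l, ρ l (Function.update A m ((A m).erase e) l ∩ X)) →
        ∃ B : ι → Finset α, (∀ i, B i ⊆ E) ∧ (Pairwise fun i j => Disjoint (B i) (B j)) ∧
          ∀ X ⊆ E, #X ≤ ∑ l, ρ l (B l ∩ X) := by
      intro m hm h
      have hle : ∀ l, Function.update A m ((A m).erase e) l ⊆ A l := by
        intro l
        by_cases hl : l = m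
        · subst hl; simpa using erase_subset _ _
        · simp [hl]
      refine ih _ ?_ _ (fun l => (hle l).trans (hAE l)) h rfl
      rw [← hn]
      refine sum_lt_sum (fun l _ => card_le_card (hle l)) ⟨m, mem_univ _, ?_⟩
      simpa using card_erase_lt_of_mem hm
    rcases card_le_erase_or E ρ hmono hsub A hA hij e with h | h
    · exact step i hei h
    · exact step j hej h

/-- A set covered by `k` independent sets has at most `k` times its rank many elements. -/
theorem encard_le_mul_eRk {α : Type*} (M : Matroid α) (k : ℕ) (c : α → Fin k)
    (hc : ∀ i : Fin k, M.Indep (M.E ∩ c ⁻¹' {i})) (Y : Set α) (hY : Y ⊆ M.E) :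
    Y.encard ≤ k * M.eRk Y := by
  have hYU : Y = ⋃ i, (Y ∩ c ⁻¹' {i}) := by
    ext x; simp
  calc Y.encard = (⋃ i, (Y ∩ c ⁻¹' {i})).encard := by rw [← hYU]
    _ ≤ ∑ i : Fin k, (Y ∩ c ⁻¹' {i}).encard := Set.encard_iUnion_le_of_fintype _
    _ ≤ ∑ _i : Fin k, M.eRk Y := Finset.sum_le_sum fun i _ =>
        ((hc i).subset (Set.inter_subset_inter_left _ hY)).encard_le_eRk_of_subset
          Set.inter_subset_left
    _ = k * M.eRk Y := by simp

/-- The partition statement with the `k` permutations (the identity among them) indexed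
uniformly. -/
theorem exists_partition_indep_image {α : Type*} (M : Matroid α) (hfin : M.E.Finite)
    (k : ℕ) (c : α → Fin k) (hc : ∀ i : Fin k, M.Indep (M.E ∩ c ⁻¹' {i}))
    (σ : Fin k → α → α) (hσ : ∀ i, Set.BijOn (σ i) M.E M.E) :
    ∃ A : Fin k → Set α, (⋃ i, A i) = M.E ∧ (Pairwise fun i j => Disjoint (A i) (A j)) ∧
      ∀ i, M.Indep (σ i '' A i) := by
  classical
  have : M.Finite := ⟨hfin⟩
  have hne : ∀ X, M.eRk X ≠ ⊤ := fun X => Matroid.eRk_ne_top_iff.2 (M.isRkFinite_set X)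
  set ρ : Fin k → Finset α → ℕ := fun i X => (M.eRk (σ i '' X)).toNat with hρ
  have hcast : ∀ i X, ((ρ i X : ℕ) : ℕ∞) = M.eRk (σ i '' X) := fun i X => ENat.natCast_toNat (hne _)
  have hmono : ∀ i, Monotone (ρ i) := by
    intro i X Y h
    have : (ρ i X : ℕ∞) ≤ ρ i Y := by
      rw [hcast, hcast]
      exact M.eRk_mono (Set.image_mono (by exact_mod_cast h))
    exact_mod_cast this
  have hsub : ∀ i X Y, ρ i (X ∪ Y) + ρ i (X ∩ Y) ≤ ρ i X + ρ i Y := by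
    intro i X Y
    have : (ρ i (X ∪ Y) + ρ i (X ∩ Y) : ℕ∞) ≤ ρ i X + ρ i Y := by
      simp only [hcast]
      rw [add_comm, Finset.coe_union, Finset.coe_inter, Set.image_union]
      exact (add_le_add_left (M.eRk_mono (Set.image_inter_subset _ _ _)) _).trans
        (M.eRk_inter_add_eRk_union_le _ _)
    exact_mod_cast this
  set E := hfin.toFinset with hE
  have hEcoe : (E : Set α) = M.E := hfin.coe_toFinset
  have hbound : ∀ X ⊆ E, X.card ≤ ∑ l, ρ l (E ∩ X) := by
    intro X hX
    have hXE : (X : Set α) ⊆ M.E := by rw [← hEcoe]; exact_mod_cast hX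
    have h1 : ∀ l, X.card ≤ k * ρ l X := by
      intro l
      have := encard_le_mul_eRk M k c hc (σ l '' X)
        ((Set.image_mono hXE).trans (hσ l).mapsTo.image_subset)
      rw [((hσ l).injOn.mono hXE).encard_image, ← hcast, Set.encard_coe_eq_coe_finsetCard] at this
      exact_mod_cast this
    rw [Finset.inter_eq_right.2 hX]
    have h2 : k * X.card ≤ k * ∑ l, ρ l X := by
      rw [Finset.mul_sum]
      calc k * X.card = ∑ _l : Fin k, X.card := by simp
        _ ≤ _ := Finset.sum_le_sum fun l _ => h1 l
    rcases Nat.eq_zero_or_pos k with rfl | hk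
    · -- With no colours available the ground set is empty.
      obtain rfl : X = ∅ := Finset.eq_empty_of_forall_notMem fun x _ => (c x).elim0
      simp
    · exact Nat.le_of_mul_le_mul_left h2 hk
  obtain ⟨B, hBE, hdisj, hB⟩ := exists_disjoint_of_card_le E ρ hmono hsub (fun _ => E)
    (fun _ => subset_rfl) hbound
  have hρ0 : ∀ i, ρ i ∅ = 0 := by intro i; simp [hρ]
  refine ⟨fun i => B i, ?_, fun i j hij => Finset.disjoint_coe.2 (hdisj hij), fun i => ?_⟩
  · refine subset_antisymm (Set.iUnion_subset fun i => ?_) fun e he => ?_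
    · rw [← hEcoe]; exact_mod_cast hBE i
    · by_contra hcon
      have hcon' : ∀ i, e ∉ B i := by simpa using hcon
      have := hB {e} (by simpa [hE] using he)
      simp [Finset.inter_singleton_of_notMem (hcon' _), hρ0] at this
  · have hle := hB (B i) (hBE i)
    rw [Finset.sum_eq_single i] at hle
    · rw [Finset.inter_self] at hle
      refine (M.isRkFinite_set _).indep_of_encard_le_eRk ?_
      rw [← hcast]
      refine (Set.encard_image_le _ _).trans ?_
      rw [Set.encard_coe_eq_coe_finsetCard]
      exact_mod_cast hle
    · intro l _ hl
      rw [Finset.disjoint_iff_inter_eq_empty.1 (hdisj hl), hρ0]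
    · simp

/-- Let `M` be a loopless matroid on a finite ground set `E` with `χ(M) ≤ k`,
and let `π 1, …, π (k-1)` be permutations of `E`. Then `E` can be partitioned
into sets `A 1, …, A k` such that `A 1` is independent in `M` and
`π i '' A (i+1)` is independent in `M` for each `i = 1, …, k-1`. -/
theorem matroid_colorable_permutations {α : Type*} (M : Matroid α)
    (hfin : M.E.Finite) (hloopless : ∀ e ∈ M.E, M.Indep {e})
    (k : ℕ) (hk : 1 ≤ k)
    (hchrom : ∃ c : α → Fin k, ∀ i : Fin k, M.Indep (M.E ∩ c ⁻¹' {i}))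
    (π : Fin (k - 1) → α → α) (hπ : ∀ i, Set.BijOn (π i) M.E M.E) :
    ∃ A : Fin k → Set α,
      (⋃ i, A i) = M.E ∧
      (Pairwise fun i j => Disjoint (A i) (A j)) ∧
      M.Indep (A ⟨0, hk⟩) ∧
      ∀ i : Fin (k - 1),
        M.Indep (π i '' A ⟨i.val + 1, by have := i.isLt; omega⟩) := by
  obtain ⟨c, hc⟩ := hchrom
  obtain ⟨A, hU, hd, hA⟩ := exists_partition_indep_image M hfin k c hc
    (fun j => if h : j.val = 0 then id else π ⟨j.val - 1, by have := j.isLt; omega⟩) (by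
      intro j
      by_cases h : j.val = 0
      · simpa [h] using Set.bijOn_id _
      · simpa [h] using hπ _)
  refine ⟨A, hU, hd, by simpa using hA ⟨0, hk⟩, fun i => ?_⟩
  simpa using hA ⟨i.val + 1, by have := i.isLt; omega⟩
end

section
/- Let $M_1, M_2, \ldots, M_{2k}$ be matroids on the same finite ground set $E$ with $\chi(M_i) \leq k$ for all $i = 1, \ldots, 2k$. Then there exist sets $A_1, A_2, \ldots, A_{2k} \subseteq E$ such that each $A_i$ is independent in $M_i$ and the family $(A_i)_{i=1}^{2k}$ forms a $2$-covering of $E$: every element $e \in E$ belongs to exactly two of the sets $A_i$. -/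
/-!
Any `k` matroids on `E` of chromatic number at most `k` admit a partition of `E` into sets
`S 1, …, S k` with `S i` independent in the `i`-th matroid (`exists_indep_partition`). Splitting
the `2k` matroids into two groups of `k` and taking such a partition for each group gives the
`2`-covering.

The partition comes from the matroid union theorem. Since `A` is covered by `k` independent sets of
`M i`, its rank satisfies `|A| ≤ k * r i A`, and summing over `i` gives `|A| ≤ ∑ i, r i A` for every
`A ⊆ E`. That this condition suffices is proved by Rado's reduction argument
(`exists_partition_of_card_le_sum_rank`): take a minimal family `S` with
`|A| ≤ ∑ i, r i (A ∩ S i)` for all `A ⊆ E`. Submodularity forces the `S i` to be pairwise disjoint,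
and the case `A = E` then forces the sets `E ∩ S i` to be independent and to cover `E`.
-/

open Finset in
/-- The reduction step of Rado's argument: if the rank condition holds for `S`, and `e` lies in both
`S i` and `S j`, then `e` may be removed from one of them, so a minimal `S` is pairwise disjoint. -/
lemma disjoint_of_minimal_rank_condition {ι α : Type*} [Fintype ι] [DecidableEq ι] [DecidableEq α]
    (E : Finset α) (r : ι → Finset α → ℕ) (hmono : ∀ i, Monotone (r i))
    (hsub : ∀ i X Y, r i (X ∩ Y) + r i (X ∪ Y) ≤ r i X + r i Y) (S : ι → Finset α)
    (hS : Minimal (fun S : ι → Finset α => ∀ A ⊆ E, #A ≤ ∑ l, r l (A ∩ S l)) S)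
    {e : α} {i j : ι} (hei : e ∈ S i) (hej : e ∈ S j) : i = j := by
  by_contra hij
  have key : ∀ i, e ∈ S i → ∃ A ⊆ E, e ∈ A ∧
      ∑ l, r l (A ∩ Function.update S i ((S i).erase e) l) < #A := by
    intro i hei
    have hlt : Function.update S i ((S i).erase e) < S :=
      update_lt_self_iff.2 (erase_ssubset hei)
    have hnot := hS.not_prop_of_lt hlt
    push Not at hnot
    obtain ⟨A, hAE, hA⟩ := hnot
    refine ⟨A, hAE, ?_, hA⟩
    by_contra heA
    refine absurd (hS.prop A hAE) (not_le.2 (lt_of_le_of_lt (sum_le_sum fun l _ => ?_) hA))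
    apply hmono l
    intro x hx
    by_cases hl : l = i
    · subst hl
      simp only [mem_inter, Function.update_self, mem_erase] at hx ⊢
      exact ⟨hx.1, fun h => heA (h ▸ hx.1), hx.2⟩
    · simpa [Function.update_of_ne hl] using hx
  obtain ⟨A, hAE, heA, hA⟩ := key i hei
  obtain ⟨B, hBE, heB, hB⟩ := key j hej
  have hU := hS.prop (A ∪ B) (union_subset hAE hBE)
  have hI := hS.prop ((A ∩ B).erase e)
    ((erase_subset _ _).trans (inter_subset_left.trans hAE))
  have hsum : ∑ l, r l ((A ∩ B).erase e ∩ S l) + ∑ l, r l ((A ∪ B) ∩ S l) ≤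
      ∑ l, r l (A ∩ Function.update S i ((S i).erase e) l) +
        ∑ l, r l (B ∩ Function.update S j ((S j).erase e) l) := by
    rw [← sum_add_distrib, ← sum_add_distrib]
    refine sum_le_sum fun l _ => le_trans (add_le_add (hmono l ?_) (hmono l ?_)) (hsub l _ _)
    · intro x hx
      simp only [mem_inter, mem_erase, Function.update_apply] at hx ⊢
      split_ifs <;> simp_all
    · -- At `e` itself, one of the two modified families still contains `e`, as `i ≠ j`.
      intro x hx
      by_cases hxe : x = e
      · subst hxe
        simp only [mem_inter, mem_union, Function.update_apply] at hx ⊢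
        by_cases hl : l = i
        · right; simp_all
        · left; simp_all
      · simp only [mem_inter, mem_union, Function.update_apply] at hx ⊢
        split_ifs <;> simp_all
  have hc := card_inter_add_card_union A B
  have he := card_erase_add_one (mem_inter.2 ⟨heA, heB⟩)
  omega

open Finset in
/-- The matroid union theorem in terms of rank functions: if `|A| ≤ ∑ i, r i A` for all `A ⊆ E`,
then `E` is partitioned into sets `S i` of full rank `r i (S i) = |S i|`. -/
lemma exists_partition_of_card_le_sum_rank {ι α : Type*} [Fintype ι] [DecidableEq α]
    (E : Finset α) (r : ι → Finset α → ℕ) (hmono : ∀ i, Monotone (r i))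
    (hsub : ∀ i X Y, r i (X ∩ Y) + r i (X ∪ Y) ≤ r i X + r i Y)
    (hcard : ∀ i X, r i X ≤ #X) (h : ∀ A ⊆ E, #A ≤ ∑ i, r i A) :
    ∃ S : ι → Finset α, (∀ i, S i ⊆ E) ∧ (∀ i, r i (S i) = #(S i)) ∧
      ∀ e ∈ E, ∃! i, e ∈ S i := by
  classical
  obtain ⟨S, hS⟩ := exists_minimal_of_wellFoundedLT
    (fun S : ι → Finset α => ∀ A ⊆ E, #A ≤ ∑ l, r l (A ∩ S l))
    ⟨fun _ => E, fun A hA => by simpa [inter_eq_left.2 hA] using h A hA⟩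
  have hdisj : ∀ {e i j}, e ∈ S i → e ∈ S j → i = j := fun hi hj =>
    disjoint_of_minimal_rank_condition E r hmono hsub S hS hi hj
  have h1 := hS.prop E subset_rfl
  have h2 : ∑ i, r i (E ∩ S i) ≤ ∑ i, #(E ∩ S i) := sum_le_sum fun i _ => hcard i _
  have h3 : #(univ.biUnion fun i => E ∩ S i) = ∑ i, #(E ∩ S i) := by
    refine card_biUnion fun i _ j _ hij => disjoint_left.2 fun x hx hy => hij ?_
    exact hdisj (mem_inter.1 hx).2 (mem_inter.1 hy).2
  have h4 : (univ.biUnion fun i => E ∩ S i) ⊆ E := biUnion_subset.2 fun i _ => inter_subset_left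
  have h5 := card_le_card h4
  have h6 := eq_of_subset_of_card_le h4 (by omega)
  refine ⟨fun i => E ∩ S i, fun i => inter_subset_left, fun i => ?_, fun e he => ?_⟩
  · exact (sum_eq_sum_iff_of_le fun i _ => hcard i (E ∩ S i)).1 (by omega) i (mem_univ i)
  · rw [← h6] at he
    obtain ⟨i, -, hi⟩ := mem_biUnion.1 he
    exact ⟨i, hi, fun j hj => hdisj (mem_inter.1 hj).2 (mem_inter.1 hi).2⟩

/-- A set covered by `k` independent sets has size at most `k` times its rank. -/
lemma card_le_mul_eRk {α : Type*} {k : ℕ} (M : Matroid α) (E : Set α) (c : α → Fin k)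
    (hc : ∀ j, M.Indep (E ∩ c ⁻¹' {j})) (A : Finset α) (hA : (A : Set α) ⊆ E) :
    A.card ≤ k * (M.eRk A).toNat := by
  classical
  have hfib : ∀ j ∈ (Finset.univ : Finset (Fin k)),
      (A.filter fun a => c a = j).card ≤ (M.eRk A).toNat := by
    intro j _
    have hind : M.Indep (A.filter fun a => c a = j : Finset α) :=
      (hc j).subset fun x hx => by
        have hx := Finset.mem_filter.1 (Finset.mem_coe.1 hx)
        exact ⟨hA hx.1, hx.2⟩
    have hle := hind.encard_le_eRk_of_subset (X := (A : Set α))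
      (by exact_mod_cast Finset.filter_subset _ A)
    have hfin : M.eRk A ≠ ⊤ :=
      ((M.eRk_le_encard A).trans_lt A.finite_toSet.encard_lt_top).ne
    rw [Set.encard_coe_eq_coe_finsetCard] at hle
    have := ENat.toNat_le_toNat hle hfin
    rwa [ENat.toNat_natCast] at this
  have := Finset.card_le_mul_card_image_of_maps_to (f := c) (s := A) (t := Finset.univ)
    (fun a _ => Finset.mem_univ _) _ hfib
  rw [Finset.card_univ, Fintype.card_fin] at this
  linarith

lemma exists_indep_partition {α : Type*} {k : ℕ} (hk : 1 ≤ k) (M : Fin k → Matroid α) (E : Set α)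
    (hfin : E.Finite)
    (hchrom : ∀ i, ∃ c : α → Fin k, ∀ j : Fin k, (M i).Indep (E ∩ c ⁻¹' {j})) :
    ∃ S : Fin k → Set α, (∀ i, S i ⊆ E) ∧ (∀ i, (M i).Indep (S i)) ∧
      ∀ e ∈ E, ∃! i, e ∈ S i := by
  classical
  lift E to Finset α using hfin
  have htop : ∀ i (X : Finset α), (M i).eRk X ≠ ⊤ := fun i X =>
    (((M i).eRk_le_encard X).trans_lt X.finite_toSet.encard_lt_top).ne
  obtain ⟨S, hSE, hSr, hSu⟩ := exists_partition_of_card_le_sum_rank E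
    (fun i X => ((M i).eRk X).toNat)
    (fun i X Y hXY => ENat.toNat_le_toNat ((M i).eRk_mono (by exact_mod_cast hXY)) (htop i Y))
    (fun i X Y => by
      have h := (M i).eRk_inter_add_eRk_union_le X Y
      rw [← Finset.coe_inter, ← Finset.coe_union] at h
      have h := ENat.toNat_le_toNat h (by simp [htop])
      rwa [ENat.toNat_add (htop _ _) (htop _ _), ENat.toNat_add (htop _ _) (htop _ _)] at h)
    (fun i X => by
      have h := (M i).eRk_le_encard X
      rw [Set.encard_coe_eq_coe_finsetCard] at h
      simpa using ENat.toNat_le_toNat h (by simp))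
    (fun A hA => by
      have h : ∀ i ∈ (Finset.univ : Finset (Fin k)), A.card ≤ k * ((M i).eRk A).toNat := by
        intro i _
        obtain ⟨c, hc⟩ := hchrom i
        exact card_le_mul_eRk (M i) E c hc A (by exact_mod_cast hA)
      have hs := Finset.sum_le_sum h
      rw [Finset.sum_const, Finset.card_univ, Fintype.card_fin, smul_eq_mul,
        ← Finset.mul_sum] at hs
      exact Nat.le_of_mul_le_mul_left hs hk)
  refine ⟨fun i => S i, fun i => by exact_mod_cast hSE i, fun i => ?_, fun e he => ?_⟩
  · rw [Matroid.indep_iff_eRk_eq_encard_of_finite (S i).finite_toSet,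
      Set.encard_coe_eq_coe_finsetCard, ← hSr i, ENat.natCast_toNat (htop _ _)]
  · simpa using hSu e (by exact_mod_cast he)

theorem matroid_two_covering {α : Type*} {k : ℕ} (hk : 1 ≤ k)
    (M : Fin (2 * k) → Matroid α) (E : Set α) (hE : ∀ i, (M i).E = E)
    (hfin : E.Finite)
    (hchrom : ∀ i, ∃ c : α → Fin k, ∀ j : Fin k, (M i).Indep (E ∩ c ⁻¹' {j})) :
    ∃ A : Fin (2 * k) → Set α,
      (∀ i, A i ⊆ E) ∧
      (∀ i, (M i).Indep (A i)) ∧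
      ∀ e ∈ E, {i : Fin (2 * k) | e ∈ A i}.ncard = 2 := by
  have hpart := fun b : Fin 2 => exists_indep_partition hk
    (fun j => M (finProdFinEquiv (b, j))) E hfin (fun j => hchrom _)
  choose S hSE hSI hSu using hpart
  refine ⟨fun i => S (finProdFinEquiv.symm i).1 (finProdFinEquiv.symm i).2,
    fun i => hSE _ _, fun i => ?_, fun e he => ?_⟩
  · have h := hSI (finProdFinEquiv.symm i).1 (finProdFinEquiv.symm i).2
    rwa [Prod.mk.eta, Equiv.apply_symm_apply] at h
  choose c hc hcu using fun b => hSu b e he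
  have hset : {i : Fin (2 * k) | e ∈ S (finProdFinEquiv.symm i).1 (finProdFinEquiv.symm i).2} =
      Set.range fun b : Fin 2 => finProdFinEquiv (b, c b) := by
    ext i
    obtain ⟨⟨b, j⟩, rfl⟩ := finProdFinEquiv.surjective i
    simp only [Set.mem_setOf_eq, Equiv.symm_apply_apply, Set.mem_range,
      EmbeddingLike.apply_eq_iff_eq, Prod.mk.injEq]
    constructor
    · intro h
      exact ⟨b, rfl, (hcu b j h).symm⟩
    · rintro ⟨b, rfl, rfl⟩
      exact hc b
  rw [hset, ← Set.image_univ, Set.ncard_image_of_injective]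
  · simp
  · intro b b' h
    simpa using congrArg (fun x => (finProdFinEquiv.symm x).1) h
end
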